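/- Let σ, τ be real numbers with σ > 0, τ > 0 and σ/τ irrational, and let b₁, b₂, b₁', b₂' be nonzero integers. Then the identity (4/(b₁b₂u²))·sinh(σb₁u/2)·sinh(τb₂u/2) = (4/(b₁'b₂'u²))·sinh(σb₁'u/2)·sinh(τb₂'u/2) holds for every real u ≠ 0 if and only if |b₁'| = |b₁| and |b₂'| = |b₂|. -/

import Mathlib

/-!
Put `p = σ b₁ / 2` and `q = τ b₂ / 2`. Then `S_b = (σ τ / u²) (sinh (p u) / p) (sinh (q u) / q)`,
which is even in `p` and in `q` and symmetric under exchanging them. As `u → ∞` the product of the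
two quotients is asymptotic to `exp ((|p| + |q|) u) / (4 |p| |q|)`, so `S_b` determines the sum and
the product of `|p|` and `|q|`, hence the unordered pair. Irrationality of `σ / τ` excludes a
match that exchanges the two factors.
-/

open Filter Topology Asymptotics Real

theorem eq_and_eq_or_eq_and_eq_of_add_eq_of_mul_eq {R : Type*} [CommRing R] [NoZeroDivisors R]
    {p q r s : R} (hadd : p + q = r + s) (hmul : p * q = r * s) :
    p = r ∧ q = s ∨ p = s ∧ q = r := by
  have hroots : (p - r) * (p - s) = 0 := by linear_combination p * hadd - hmul
  rcases mul_eq_zero.1 hroots with hpr | hps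
  · exact .inl ⟨sub_eq_zero.1 hpr, by linear_combination hadd - hpr⟩
  · exact .inr ⟨sub_eq_zero.1 hps, by linear_combination hadd - hps⟩

theorem eq_and_eq_of_isEquivalent_const_mul_exp {a b c d : ℝ} (hd : d ≠ 0)
    (h : (fun u ↦ c * exp (a * u)) ~[atTop] fun u ↦ d * exp (b * u)) : a = b ∧ c = d := by
  have hratio : Tendsto (fun u ↦ c / d * exp ((a - b) * u)) atTop (𝓝 1) := by
    refine ((isEquivalent_iff_tendsto_one (.of_forall fun u ↦ by positivity)).1 h).congr fun u ↦ ?_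
    rw [Pi.div_apply, mul_div_mul_comm, ← exp_sub, sub_mul]
  -- Shifting `u` by `1` multiplies the ratio by `exp (a - b)` without changing its limit.
  have hshift : Tendsto (fun u ↦ c / d * exp ((a - b) * (u + 1))) atTop (𝓝 (exp (a - b) * 1)) := by
    refine (hratio.const_mul _).congr fun u ↦ ?_
    rw [mul_left_comm, ← exp_add]
    ring_nf
  have hexp : exp (a - b) * 1 = 1 := tendsto_nhds_unique hshift
    (hratio.comp (tendsto_atTop_add_const_right _ 1 tendsto_id))
  have hab : a = b := sub_eq_zero.1 (exp_eq_one_iff _ |>.1 (by rwa [mul_one] at hexp))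
  have hcd : c / d = 1 := by simpa [hab] using hratio
  exact ⟨hab, (div_eq_one_iff_eq hd).1 hcd⟩

theorem isEquivalent_sinh_atTop : sinh ~[atTop] fun x ↦ exp x / 2 := by
  have hneg : (fun x ↦ exp (-x) / 2) =o[atTop] fun x ↦ exp x / 2 := by
    have hexp : (fun x ↦ exp (-x)) =o[atTop] exp :=
      isLittleO_exp_comp_exp_comp.2 <| by
        simpa [two_mul] using tendsto_id.const_mul_atTop (two_pos : (0 : ℝ) < 2)
    simpa only [div_eq_inv_mul] using (hexp.const_mul_left _).const_mul_right (by norm_num)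
  refine (IsEquivalent.refl.sub_isLittleO hneg).congr_left (.of_forall fun x ↦ ?_)
  rw [sinh_eq, sub_div, Pi.sub_apply]

theorem sinh_abs_mul_div_abs (p u : ℝ) : sinh (|p| * u) / |p| = sinh (p * u) / p := by
  rcases abs_choice p with hp | hp <;> simp [hp]

theorem isEquivalent_sinh_mul_div {p : ℝ} (hp : p ≠ 0) :
    (fun u ↦ sinh (p * u) / p) ~[atTop] fun u ↦ exp (|p| * u) / 2 / |p| := by
  have hlim : Tendsto (fun u ↦ |p| * u) atTop atTop :=
    tendsto_id.const_mul_atTop (abs_pos.2 hp)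
  simp only [← sinh_abs_mul_div_abs p]
  exact (isEquivalent_sinh_atTop.comp_tendsto hlim).div IsEquivalent.refl

theorem isEquivalent_sinh_mul_div_mul_sinh_mul_div {p q : ℝ} (hp : p ≠ 0) (hq : q ≠ 0) :
    (fun u ↦ sinh (p * u) / p * (sinh (q * u) / q)) ~[atTop]
      fun u ↦ (4 * (|p| * |q|))⁻¹ * exp ((|p| + |q|) * u) := by
  refine ((isEquivalent_sinh_mul_div hp).mul (isEquivalent_sinh_mul_div hq)).congr_right
    (.of_forall fun u ↦ ?_)
  simp only [Pi.mul_apply, add_mul, exp_add]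
  field_simp
  norm_num

theorem sinh_mul_div_mul_sinh_mul_div_eq_iff {p q r s : ℝ}
    (hp : p ≠ 0) (hq : q ≠ 0) (hr : r ≠ 0) (hs : s ≠ 0) :
    (∀ u ≠ 0, sinh (p * u) / p * (sinh (q * u) / q) = sinh (r * u) / r * (sinh (s * u) / s)) ↔
      |p| = |r| ∧ |q| = |s| ∨ |p| = |s| ∧ |q| = |r| := by
  constructor
  · intro h
    have hequiv := ((isEquivalent_sinh_mul_div_mul_sinh_mul_div hp hq).symm.congr_right
      ((eventually_ne_atTop 0).mono h)).trans (isEquivalent_sinh_mul_div_mul_sinh_mul_div hr hs)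
    obtain ⟨hadd, hinv⟩ := eq_and_eq_of_isEquivalent_const_mul_exp (by positivity) hequiv
    have hmul : |p| * |q| = |r| * |s| := mul_left_cancel₀ four_ne_zero (inv_injective hinv)
    exact eq_and_eq_or_eq_and_eq_of_add_eq_of_mul_eq hadd hmul
  · rintro (⟨hpr, hqs⟩ | ⟨hps, hqr⟩) u -
    · rw [← sinh_abs_mul_div_abs p, ← sinh_abs_mul_div_abs q, hpr, hqs,
        sinh_abs_mul_div_abs, sinh_abs_mul_div_abs]
    · rw [← sinh_abs_mul_div_abs p, ← sinh_abs_mul_div_abs q, hps, hqr,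
        sinh_abs_mul_div_abs, sinh_abs_mul_div_abs, mul_comm]

theorem S2xS2_S_eq_sinh_mul_div_mul_sinh_mul_div {σ τ : ℝ} (hσ : σ ≠ 0) (hτ : τ ≠ 0)
    (b₁ b₂ u : ℝ) :
    4 / (b₁ * b₂ * u ^ 2) * (sinh (σ * b₁ * u / 2) * sinh (τ * b₂ * u / 2)) =
      σ * τ / u ^ 2 *
        (sinh (σ * b₁ / 2 * u) / (σ * b₁ / 2) * (sinh (τ * b₂ / 2 * u) / (τ * b₂ / 2))) := by
  rw [mul_div_right_comm (σ * b₁), mul_div_right_comm (τ * b₂)]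
  field_simp
  norm_num

theorem S2xS2_S_eq_iff {σ τ b₁ b₂ b₁' b₂' : ℝ} (hσ : σ ≠ 0) (hτ : τ ≠ 0)
    (h1 : b₁ ≠ 0) (h2 : b₂ ≠ 0) (h1' : b₁' ≠ 0) (h2' : b₂' ≠ 0) :
    (∀ u : ℝ, u ≠ 0 →
        4 / (b₁ * b₂ * u ^ 2) * (sinh (σ * b₁ * u / 2) * sinh (τ * b₂ * u / 2)) =
        4 / (b₁' * b₂' * u ^ 2) * (sinh (σ * b₁' * u / 2) * sinh (τ * b₂' * u / 2))) ↔
      |b₁'| = |b₁| ∧ |b₂'| = |b₂| ∨ |σ * b₁| = |τ * b₂'| ∧ |τ * b₂| = |σ * b₁'| := by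
  simp only [S2xS2_S_eq_sinh_mul_div_mul_sinh_mul_div hσ hτ]
  rw [forall₂_congr fun u (hu : u ≠ 0) ↦ mul_right_inj' (a := σ * τ / u ^ 2) (by positivity),
    sinh_mul_div_mul_sinh_mul_div_eq_iff (by positivity) (by positivity) (by positivity)
      (by positivity)]
  simp only [abs_div, div_left_inj' (abs_ne_zero.2 (two_ne_zero (α := ℝ)))]
  simp only [abs_mul σ b₁, abs_mul σ b₁', abs_mul τ b₂, abs_mul τ b₂',
    mul_right_inj' (abs_ne_zero.2 hσ), mul_right_inj' (abs_ne_zero.2 hτ), eq_comm]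

theorem abs_mul_ratCast_ne_of_irrational_div {σ τ : ℝ} (hirr : Irrational (σ / τ)) {a : ℚ}
    (ha : a ≠ 0) (b : ℚ) : |σ * a| ≠ |τ * b| := by
  intro h
  have hτ : τ ≠ 0 := (div_ne_zero_iff.1 hirr.ne_zero).2
  have hrat : |σ / τ * a| = |(b : ℝ)| := by
    rw [div_mul_eq_mul_div, abs_div, h, abs_mul, mul_div_cancel_left₀ _ (abs_ne_zero.2 hτ)]
  rcases abs_eq_abs.1 hrat with hb | hb
  · exact (hirr.mul_ratCast ha).ne_rat b hb
  · exact (hirr.mul_ratCast ha).ne_rat (-b) (by rw [hb, Rat.cast_neg])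

theorem S2xS2_S_eq_iff_of_irrational_general {σ τ : ℝ} (hirr : Irrational (σ / τ))
    {b₁ b₂ b₁' b₂' : ℚ} (h1 : b₁ ≠ 0) (h2 : b₂ ≠ 0) (h1' : b₁' ≠ 0) (h2' : b₂' ≠ 0) :
    (∀ u : ℝ, u ≠ 0 →
        4 / ((b₁ : ℝ) * (b₂ : ℝ) * u ^ 2) *
            (sinh (σ * (b₁ : ℝ) * u / 2) * sinh (τ * (b₂ : ℝ) * u / 2)) =
        4 / ((b₁' : ℝ) * (b₂' : ℝ) * u ^ 2) *
            (sinh (σ * (b₁' : ℝ) * u / 2) * sinh (τ * (b₂' : ℝ) * u / 2))) ↔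
      (|b₁'| = |b₁| ∧ |b₂'| = |b₂|) := by
  obtain ⟨hσ, hτ⟩ := div_ne_zero_iff.1 hirr.ne_zero
  rw [S2xS2_S_eq_iff hσ hτ (mod_cast h1) (mod_cast h2) (mod_cast h1') (mod_cast h2'),
    or_iff_left fun hcross ↦ abs_mul_ratCast_ne_of_irrational_div hirr h1 b₂' hcross.1]
  norm_cast

/-- The analytic equivalence (i) ⟺ (ii) of Theorem 1.9 (Thmspheres) of the paper: when `σ/τ`
is irrational, the localization values `S_b` and `S_b'` of the circle actions `ψ_b`, `ψ_b'` on
`S² × S²` agree as functions of `u` iff `|b₁'| = |b₁|` and `|b₂'| = |b₂|`. -/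
theorem S2xS2_S_eq_iff_of_irrational
    (σ τ : ℝ) (hσ : 0 < σ) (hτ : 0 < τ) (hirr : Irrational (σ / τ))
    (b₁ b₂ b₁' b₂' : ℤ) (h1 : b₁ ≠ 0) (h2 : b₂ ≠ 0) (h1' : b₁' ≠ 0) (h2' : b₂' ≠ 0) :
    (∀ u : ℝ, u ≠ 0 →
        4 / ((b₁ : ℝ) * (b₂ : ℝ) * u ^ 2) *
            (Real.sinh (σ * (b₁ : ℝ) * u / 2) * Real.sinh (τ * (b₂ : ℝ) * u / 2)) =
        4 / ((b₁' : ℝ) * (b₂' : ℝ) * u ^ 2) *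
            (Real.sinh (σ * (b₁' : ℝ) * u / 2) * Real.sinh (τ * (b₂' : ℝ) * u / 2))) ↔
      (|b₁'| = |b₁| ∧ |b₂'| = |b₂|) := by
  exact_mod_cast S2xS2_S_eq_iff_of_irrational_general hirr (Int.cast_ne_zero.2 h1)
    (Int.cast_ne_zero.2 h2) (Int.cast_ne_zero.2 h1') (Int.cast_ne_zero.2 h2')
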